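/- arXiv:1810.09046 — 2 statements merged into one kernel-verified Lean document; each statement's English description precedes it below -/
import Mathlib

section
/- Characterization of generic test tensors: a symmetric matrix x ∈ Matrix (Fin 4) (Fin 4) ℝ lies in the topological interior of the cone D (i.e., x is generic) if and only if ⟨T, x⟩ > 0 for every nonzero symmetric matrix T satisfying the dominant energy condition. -/
open Matrix MeasureTheory Filter Topology

noncomputable section

abbrev Vec4 : Type := Fin 4 → ℝ
abbrev Mat4 : Type := Matrix (Fin 4) (Fin 4) ℝ

/-- The Minkowski inner product on ℝ⁴. -/
def mink (x y : Vec4) : ℝ := x 0 * y 0 - x 1 * y 1 - x 2 * y 2 - x 3 * y 3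

/-- The matrix diag(1,-1,-1,-1). -/
def E : Mat4 := Matrix.diagonal ![1, -1, -1, -1]

def FutureCausal (x : Vec4) : Prop := 0 ≤ mink x x ∧ 0 ≤ x 0
def FutureTimelike (x : Vec4) : Prop := 0 < mink x x ∧ 0 < x 0
def FutureNull (x : Vec4) : Prop := x ≠ 0 ∧ mink x x = 0 ∧ 0 < x 0
def UnitTimelike (x : Vec4) : Prop := FutureTimelike x ∧ mink x x = 1

/-- The dominant energy condition for a matrix. -/
def DEC (T : Mat4) : Prop :=
  ∀ ξ ζ : Vec4, FutureCausal ξ → FutureCausal ζ → 0 ≤ ∑ i, ∑ j, ξ i * T i j * ζ j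

/-- ⟨T, x⟩ = Σᵢⱼ T i j * x i j. -/
def minner (T x : Mat4) : ℝ := ∑ i, ∑ j, T i j * x i j

/-- The cone D of finite sums of symmetrized products of future causal vectors. -/
def coneD : Set Mat4 :=
  { x | ∃ (n : ℕ) (ξ ζ : Fin n → Vec4),
      (∀ k, FutureCausal (ξ k)) ∧ (∀ k, FutureCausal (ζ k)) ∧
      x = ∑ k, (1/2 : ℝ) • (vecMulVec (ξ k) (ζ k) + vecMulVec (ζ k) (ξ k)) }

/-- A symmetric matrix is generic if it lies in the interior of D, taken within
the space of symmetric matrices. -/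
def Generic (x : Mat4) : Prop :=
  ∃ h : xᵀ = x, (⟨x, h⟩ : { A : Mat4 // Aᵀ = A }) ∈
    interior { A : { A : Mat4 // Aᵀ = A } | A.val ∈ coneD }

/-- Partial derivative in the a-th coordinate direction. -/
def pd (a : Fin 4) (f : Vec4 → ℝ) (p : Vec4) : ℝ := fderiv ℝ f p (Pi.single a 1)

def SmoothMatField (T : Vec4 → Mat4) : Prop := ∀ a b, ContDiff ℝ (⊤ : ℕ∞) fun p => T p a b
def SymValued (T : Vec4 → Mat4) : Prop := ∀ p, (T p)ᵀ = T p
def DivFree (T : Vec4 → Mat4) : Prop := ∀ p b, ∑ a, pd a (fun q => T q a b) p = 0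

/-- A collection of fields tracks a curve. -/
def Tracks (C : Set (Vec4 → Mat4)) (γ : ℝ → Vec4) : Prop :=
  ∀ x : Vec4 → Mat4, SmoothMatField x → HasCompactSupport x → SymValued x →
    (∃ O : Set Vec4, IsOpen O ∧ Set.range γ ⊆ O ∧ ∀ p ∈ O, x p ∈ coneD) →
    (∃ t₀ : ℝ, Generic (x (γ t₀))) →
    ∃ T ∈ C, 0 < ∫ p, minner (T p) (x p)

/-- Maxwell stress-energy tensor of a field strength matrix. -/
def maxwellT (F : Mat4) : Mat4 :=
  F * E * F - ((1/4 : ℝ) * (E * F * E * F).trace) • E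

/-- Source-free Maxwell equations. -/
def SolvesMaxwell (F : Vec4 → Mat4) : Prop :=
  (∀ p b, ∑ a, E a a * pd a (fun q => F q a b) p = 0) ∧
  (∀ p a b c, pd a (fun q => F q b c) p + pd b (fun q => F q c a) p
      + pd c (fun q => F q a b) p = 0)

/-- Klein–Gordon stress-energy tensor. -/
def kgT (φ : Vec4 → ℝ) (m : ℝ) (p : Vec4) : Mat4 :=
  Matrix.of fun a b =>
    pd a φ p * pd b φ p
      - (1/2 : ℝ) * E a b * ((∑ c, E c c * (pd c φ p)^2) - m^2 * (φ p)^2)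

/-- Mass-m Klein–Gordon equation. -/
def SolvesKG (φ : Vec4 → ℝ) (m : ℝ) : Prop :=
  ∀ p, pd 0 (pd 0 φ) p - pd 1 (pd 1 φ) p - pd 2 (pd 2 φ) p - pd 3 (pd 3 φ) p
    + m^2 * φ p = 0

/-!
A point of a finite-dimensional convex cone is interior exactly when every nonzero functional that
is nonnegative on the cone is positive there: a nonzero functional is an open map, so it cannot
attain its minimum `0` at an interior point, and conversely Hahn–Banach separates a noninterior
point from the interior, or, when the interior is empty, the cone spans a proper subspace, on which
some nonzero functional vanishes. On symmetric matrices the functionals are `x ↦ ⟨T, x⟩` with `T`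
symmetric, and `⟨T, x⟩` at `x = (ξ ζᵀ + ζ ξᵀ) / 2` is `∑ i, ∑ j, ξ i * T i j * ζ j`, so the dominant
energy condition says precisely that the functional is nonnegative on the generators of the cone.
-/

section ConvexCone

theorem apply_nonneg_of_forall_le {K E : Type*} [Field K] [LinearOrder K] [IsStrictOrderedRing K]
    [AddCommGroup E] [Module K E] (C : PointedCone K E) (f : E →ₗ[K] K) {a : K}
    (h : ∀ y ∈ C, a ≤ f y) {y : E} (hy : y ∈ C) : 0 ≤ f y := by
  by_contra! hneg
  have ha : a ≤ 0 := by simpa using h 0 C.zero_mem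
  have hc : 0 ≤ (a - 1) / f y := div_nonneg_of_nonpos (by linarith) hneg.le
  have hle := h _ (C.smul_mem hc hy)
  rw [map_smul, smul_eq_mul, div_mul_cancel₀ _ hneg.ne] at hle
  linarith

variable {E : Type*} [AddCommGroup E] [Module ℝ E] [TopologicalSpace E] [IsTopologicalAddGroup E]
  [ContinuousSMul ℝ E]

theorem apply_pos_of_mem_interior {s : Set E} {f : StrongDual ℝ E} (hf : f ≠ 0)
    (hs : ∀ y ∈ s, 0 ≤ f y) {x : E} (hx : x ∈ interior s) : 0 < f x := by
  have himage : f '' interior s ⊆ Set.Ici 0 :=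
    Set.image_subset_iff.2 fun y hy => hs y (interior_subset hy)
  have hmem : f x ∈ interior (Set.Ici (0 : ℝ)) :=
    interior_maximal himage (f.isOpenMap_of_ne_zero hf _ isOpen_interior)
      (Set.mem_image_of_mem f hx)
  rwa [interior_Ici] at hmem

theorem exists_dual_nonpos_of_interior_nonempty (C : PointedCone ℝ E)
    (hC : (interior (C : Set E)).Nonempty) {x : E} (hx : x ∉ interior (C : Set E)) :
    ∃ f : StrongDual ℝ E, f ≠ 0 ∧ (∀ y ∈ C, 0 ≤ f y) ∧ f x ≤ 0 := by
  obtain ⟨f, hf⟩ := geometric_hahn_banach_point_open C.convex.interior isOpen_interior hx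
  have hle : ∀ y ∈ C, f x ≤ f y := by
    have hclosure : closure (interior (C : Set E)) ⊆ {y | f x ≤ f y} :=
      closure_minimal (fun y hy => (hf y hy).le) (isClosed_le continuous_const f.continuous)
    rw [C.convex.closure_interior_eq_closure_of_nonempty_interior hC] at hclosure
    exact fun y hy => hclosure (subset_closure hy)
  refine ⟨f, ?_, fun y => apply_nonneg_of_forall_le C f.toLinearMap hle, ?_⟩
  · rintro rfl
    obtain ⟨y, hy⟩ := hC
    exact (hf y hy).false
  · simpa using hle 0 C.zero_mem

variable [T2Space E] [FiniteDimensional ℝ E]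

theorem interior_nonempty_of_span_eq_top (C : PointedCone ℝ E)
    (hC : Submodule.span ℝ (C : Set E) = ⊤) : (interior (C : Set E)).Nonempty := by
  let b := Module.Basis.ofSpan hC.ge
  have hb : ∀ i, b i ∈ C := fun i => Module.Basis.ofSpan_subset hC.ge (Set.mem_range_self i)
  have := FiniteDimensional.fintypeBasisIndex b
  let orthant : Set E := b.equivFun ⁻¹' Set.univ.pi fun _ => Set.Ioi 0
  have horthant : IsOpen orthant :=
    (isOpen_set_pi Set.finite_univ fun _ _ => isOpen_Ioi).preimage
      b.equivFun.toLinearMap.continuous_of_finiteDimensional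
  have hsubset : orthant ⊆ C := fun y hy => by
    rw [← b.sum_equivFun y]
    exact C.sum_mem fun i _ => C.smul_mem (hy i trivial).le (hb i)
  exact ⟨b.equivFun.symm 1, interior_maximal hsubset horthant (by simp [orthant])⟩

theorem exists_dual_nonpos_of_notMem_interior (C : PointedCone ℝ E) {x : E}
    (hx : x ∉ interior (C : Set E)) :
    ∃ f : StrongDual ℝ E, f ≠ 0 ∧ (∀ y ∈ C, 0 ≤ f y) ∧ f x ≤ 0 := by
  by_cases hC : Submodule.span ℝ (C : Set E) = ⊤
  · exact exists_dual_nonpos_of_interior_nonempty C (interior_nonempty_of_span_eq_top C hC) hx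
  obtain ⟨g, hg0, hg⟩ := Submodule.exists_le_ker_of_lt_top _ (lt_top_iff_ne_top.2 hC)
  have hgC : ∀ y ∈ C, g y = 0 := fun y hy => hg (Submodule.subset_span hy)
  let f := LinearMap.toContinuousLinearMap g
  have hf0 : f ≠ 0 := by simpa [f] using hg0
  obtain hfx | hfx := le_total (f x) 0
  · exact ⟨f, hf0, fun y hy => (hgC y hy).ge, hfx⟩
  · exact ⟨-f, neg_ne_zero.2 hf0, fun y hy => by simp [f, hgC y hy], by simpa using hfx⟩

theorem mem_interior_iff_forall_dual_pos {F : Type*} [AddCommGroup F] [Module ℝ F]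
    (p : E →ₗ[ℝ] F →ₗ[ℝ] ℝ) [p.IsPerfPair] (C : PointedCone ℝ E) {x : E} :
    x ∈ interior (C : Set E) ↔ ∀ y ∈ PointedCone.dual p (C : Set E), y ≠ 0 → 0 < p x y := by
  constructor
  · intro hx y hy hy0
    have hf0 : LinearMap.toContinuousLinearMap (p.flip y) ≠ 0 := by
      simpa using (map_ne_zero_iff _ (LinearMap.IsPerfPair.bijective_right p).injective).2 hy0
    exact apply_pos_of_mem_interior hf0 hy hx
  · intro h
    by_contra hx
    obtain ⟨f, hf0, hfC, hfx⟩ := exists_dual_nonpos_of_notMem_interior C hx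
    obtain ⟨y, hy⟩ := (LinearMap.IsPerfPair.bijective_right p).surjective f.toLinearMap
    have hpy : ∀ z, p z y = f z := LinearMap.congr_fun hy
    have hy0 : y ≠ 0 := by
      rintro rfl
      exact hf0 (ContinuousLinearMap.ext fun z => by simp [← hpy])
    exact (h y (fun z hz => (hfC z hz).trans_eq (hpy z).symm) hy0).not_ge ((hpy x).trans_le hfx)

end ConvexCone

section FrobeniusForm

theorem isPerfPair_of_anisotropic {K V : Type*} [Field K] [AddCommGroup V] [Module K V]
    [FiniteDimensional K V] (B : V →ₗ[K] V →ₗ[K] K) (hB : ∀ v, B v v = 0 → v = 0) :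
    B.IsPerfPair :=
  .of_injective ((injective_iff_map_eq_zero _).2 fun v hv => hB v (LinearMap.congr_fun hv v))
    ((injective_iff_map_eq_zero _).2 fun v hv => hB v (LinearMap.congr_fun hv v))

/-- The Frobenius form `⟨A, B⟩ = ∑ i, ∑ j, A i j * B i j`, which represents functionals on spaces of
matrices by matrices. It is written as a double sum, rather than as a trace, so that for `4 × 4`
matrices it unfolds to `minner`. -/
def frobeniusForm (m n R : Type*) [Fintype m] [Fintype n] [CommSemiring R] :
    Matrix m n R →ₗ[R] Matrix m n R →ₗ[R] R :=
  LinearMap.mk₂ R (fun A B => ∑ i, ∑ j, A i j * B i j)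
    (fun _ _ _ => by simp only [Matrix.add_apply, add_mul, Finset.sum_add_distrib])
    (fun _ _ _ => by simp only [Matrix.smul_apply, smul_eq_mul, mul_assoc, Finset.mul_sum])
    (fun _ _ _ => by simp only [Matrix.add_apply, mul_add, Finset.sum_add_distrib])
    (fun _ _ _ => by simp only [Matrix.smul_apply, smul_eq_mul, mul_left_comm, Finset.mul_sum])

variable {m n R : Type*} [Fintype m] [Fintype n]

theorem frobeniusForm_apply [CommSemiring R] (A B : Matrix m n R) :
    frobeniusForm m n R A B = ∑ i, ∑ j, A i j * B i j := rfl

theorem frobeniusForm_transpose_transpose [CommSemiring R] (A B : Matrix m n R) :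
    frobeniusForm n m R Aᵀ Bᵀ = frobeniusForm m n R A B :=
  Finset.sum_comm

theorem frobeniusForm_vecMulVec [CommSemiring R] (A : Matrix m n R) (v : m → R) (w : n → R) :
    frobeniusForm m n R A (vecMulVec v w) = ∑ i, ∑ j, v i * A i j * w j := by
  simp only [frobeniusForm_apply, vecMulVec_apply, mul_assoc, mul_left_comm]

theorem frobeniusForm_self_pos [CommRing R] [LinearOrder R] [IsStrictOrderedRing R]
    {A : Matrix m n R} (hA : A ≠ 0) : 0 < frobeniusForm m n R A A := by
  obtain ⟨i, j, hij⟩ : ∃ i j, A i j ≠ 0 := by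
    by_contra! h
    exact hA (Matrix.ext h)
  exact Finset.sum_pos' (fun _ _ => Finset.sum_nonneg fun _ _ => mul_self_nonneg _)
    ⟨i, Finset.mem_univ i, Finset.sum_pos' (fun _ _ => mul_self_nonneg _)
      ⟨j, Finset.mem_univ j, mul_self_pos.2 hij⟩⟩

instance isPerfPair_frobeniusForm_domRestrict [Field R] [LinearOrder R] [IsStrictOrderedRing R]
    (W : Submodule R (Matrix m n R)) : ((frobeniusForm m n R).domRestrict₁₂ W W).IsPerfPair :=
  isPerfPair_of_anisotropic _ fun _ hA =>
    Subtype.ext (by_contra fun hne => (frobeniusForm_self_pos hne).ne' hA)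

end FrobeniusForm

section SymmetricMatrices

/-- The space of symmetric matrices. Its underlying type is definitionally the subtype
`{A // Aᵀ = A}` used in `Generic`, including its topology. -/
def symmetricMatrices (n R : Type*) [Semiring R] : Submodule R (Matrix n n R) where
  carrier := {A | Aᵀ = A}
  add_mem' hA hB := (transpose_add _ _).trans (congrArg₂ _ hA hB)
  zero_mem' := transpose_zero
  smul_mem' c _ hA := (transpose_smul c _).trans (congrArg _ hA)

/-- The symmetrized product `(ξ ζᵀ + ζ ξᵀ) / 2` of two vectors. -/
def symmProd {n : Type*} (ξ ζ : n → ℝ) : symmetricMatrices n ℝ :=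
  ⟨(1 / 2 : ℝ) • (vecMulVec ξ ζ + vecMulVec ζ ξ), by
    simp [symmetricMatrices, transpose_vecMulVec, add_comm]⟩

/-- The convex cone generated by the symmetrized products of vectors in `S`, inside the space of
symmetric matrices. The cone `coneD` is the case where `S` consists of the future causal vectors. -/
def symmProdCone {n : Type*} (S : Set (n → ℝ)) : PointedCone ℝ (symmetricMatrices n ℝ) :=
  PointedCone.hull ℝ (Set.image2 symmProd S S)

variable {n : Type*}

theorem smul_symmProd (c : ℝ) (ξ ζ : n → ℝ) : c • symmProd ξ ζ = symmProd (c • ξ) ζ := by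
  ext : 1
  simp only [symmProd, SetLike.mk_smul_mk, smul_vecMulVec, vecMulVec_smul, smul_add, smul_comm c]

theorem mem_symmProdCone_iff {S : Set (n → ℝ)} (hS : ∀ c : ℝ, 0 ≤ c → ∀ v ∈ S, c • v ∈ S)
    {A : symmetricMatrices n ℝ} :
    A ∈ symmProdCone S ↔ ∃ (k : ℕ) (ξ ζ : Fin k → n → ℝ),
      (∀ i, ξ i ∈ S) ∧ (∀ i, ζ i ∈ S) ∧ A = ∑ i, symmProd (ξ i) (ζ i) := by
  constructor
  · intro hA
    obtain ⟨k, c, g, rfl⟩ := Submodule.mem_span_set'.1 hA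
    choose ξ hξ ζ hζ hg using fun i => (g i).2
    refine ⟨k, fun i => (c i : ℝ) • ξ i, ζ, fun i => hS _ (c i).2 _ (hξ i), hζ, ?_⟩
    exact Finset.sum_congr rfl fun i _ => by rw [← smul_symmProd, hg]; rfl
  · rintro ⟨k, ξ, ζ, hξ, hζ, rfl⟩
    exact Submodule.sum_mem _ fun i _ =>
      PointedCone.subset_hull (Set.mem_image2_of_mem (hξ i) (hζ i))

variable [Fintype n]

theorem frobeniusForm_symmProd {T : Matrix n n ℝ} (hT : Tᵀ = T) (ξ ζ : n → ℝ) :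
    frobeniusForm n n ℝ T (symmProd ξ ζ) = ∑ i, ∑ j, ξ i * T i j * ζ j := by
  have hswap : frobeniusForm n n ℝ T (vecMulVec ζ ξ) = frobeniusForm n n ℝ T (vecMulVec ξ ζ) := by
    rw [← frobeniusForm_transpose_transpose, hT, transpose_vecMulVec]
  rw [symmProd, map_smul, map_add, hswap, frobeniusForm_vecMulVec, smul_eq_mul]
  ring

theorem mem_dual_symmProdCone_iff {S : Set (n → ℝ)} {T : symmetricMatrices n ℝ} :
    T ∈ PointedCone.dual ((frobeniusForm n n ℝ).domRestrict₁₂ (symmetricMatrices n ℝ)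
        (symmetricMatrices n ℝ)).flip (symmProdCone S : Set (symmetricMatrices n ℝ)) ↔
      ∀ ξ ζ, ξ ∈ S → ζ ∈ S → 0 ≤ ∑ i, ∑ j, ξ i * T.1 i j * ζ j := by
  rw [symmProdCone, PointedCone.dual_hull, PointedCone.mem_dual]
  simp only [← frobeniusForm_symmProd T.2]
  exact Set.forall_mem_image2.trans ⟨fun h ξ ζ hξ hζ => h ξ hξ ζ hζ, fun h ξ hξ ζ => h ξ ζ hξ⟩

theorem generic_iff_pos_on_dec_general (S : Set (n → ℝ)) (x : symmetricMatrices n ℝ) :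
    x ∈ interior (symmProdCone S : Set (symmetricMatrices n ℝ)) ↔
      ∀ T : Matrix n n ℝ, Tᵀ = T → (∀ ξ ζ, ξ ∈ S → ζ ∈ S → 0 ≤ ∑ i, ∑ j, ξ i * T i j * ζ j) →
        T ≠ 0 → 0 < ∑ i, ∑ j, T i j * x.1 i j := by
  rw [mem_interior_iff_forall_dual_pos ((frobeniusForm n n ℝ).domRestrict₁₂
    (symmetricMatrices n ℝ) (symmetricMatrices n ℝ)).flip]
  constructor
  · exact fun h T hT hdec hT0 => h ⟨T, hT⟩ (mem_dual_symmProdCone_iff.2 hdec)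
      fun h0 => hT0 (congrArg Subtype.val h0)
  · exact fun h T hT hT0 => h T.1 T.2 (mem_dual_symmProdCone_iff.1 hT)
      fun h0 => hT0 (Subtype.ext h0)

end SymmetricMatrices

section FutureCausal

theorem FutureCausal.smul {c : ℝ} (hc : 0 ≤ c) {v : Vec4} (hv : FutureCausal v) :
    FutureCausal (c • v) := by
  have hmink : mink (c • v) (c • v) = c ^ 2 * mink v v := by
    simp only [mink, Pi.smul_apply, smul_eq_mul]
    ring
  exact ⟨hmink ▸ mul_nonneg (sq_nonneg c) hv.1, mul_nonneg hc hv.2⟩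

theorem mem_coneD_iff {A : symmetricMatrices (Fin 4) ℝ} :
    A.1 ∈ coneD ↔ A ∈ symmProdCone {v : Vec4 | FutureCausal v} := by
  rw [mem_symmProdCone_iff (S := {v : Vec4 | FutureCausal v}) fun _ hc _ hv => hv.smul hc]
  simp only [Subtype.ext_iff, Submodule.coe_sum]
  rfl

theorem generic_iff_mem_interior {x : Mat4} (hx : xᵀ = x) :
    Generic x ↔ (⟨x, hx⟩ : symmetricMatrices (Fin 4) ℝ) ∈
      interior (symmProdCone {v : Vec4 | FutureCausal v} : Set (symmetricMatrices (Fin 4) ℝ)) := by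
  have hcone : {A : symmetricMatrices (Fin 4) ℝ | A.1 ∈ coneD} =
      symmProdCone {v : Vec4 | FutureCausal v} := Set.ext fun _ => mem_coneD_iff
  rw [← hcone]
  exact ⟨fun ⟨_, h⟩ => h, fun h => ⟨hx, h⟩⟩

end FutureCausal

/-- Characterization of generic test tensors. -/
theorem generic_iff_pos_on_dec (x : Mat4) (hsym : xᵀ = x) :
    Generic x ↔ ∀ T : Mat4, Tᵀ = T → DEC T → T ≠ 0 → 0 < minner T x :=
  (generic_iff_mem_interior hsym).trans (generic_iff_pos_on_dec_general _ _)
end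
end

section
/- Geroch–Jang theorem in Minkowski spacetime: let γ : ℝ → ℝ⁴ be a smooth curve with γ'(t) future timelike for every t. Suppose that for every open set O ⊆ ℝ⁴ containing the range of γ there exists a smooth field T : ℝ⁴ → Matrix (Fin 4) (Fin 4) ℝ with symmetric values, satisfying the dominant energy condition at every point, divergence-free, not identically zero, and whose topological support (the closure of {p : T(p) ≠ 0}) is contained in O. Then γ is a geodesic up to parameterization: for every t ∈ ℝ there exists c ∈ ℝ with γ''(t) = c • γ'(t). -/
open Matrix MeasureTheory Filter Topology

noncomputable section

/-!
The momentum of a conserved field `T` is constant in time and equals the rate of change of the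
energy dipole. If `T` lives in a thin tube around the worldline, its centre of mass (dipole over
energy) therefore moves with constant velocity. The dominant energy condition gives
`|T a b| ≤ T 0 0`, so the energy of a nonzero field is positive and the centre of mass stays inside
the tube, whose slices are balls. Letting the tube shrink, the worldline is a uniform limit of
affine motions, hence straight.
-/

/-- The spacetime `ℝ × ℝⁿ`, coordinate `0` being time. -/
abbrev Spacetime (n : ℕ) : Type := Fin (n + 1) → ℝ

section Calculus

lemma integral_fderiv_apply_eq_zero {V F : Type*} [NormedAddCommGroup V] [NormedSpace ℝ V]
    [FiniteDimensional ℝ V] [MeasurableSpace V] [BorelSpace V] [NormedAddCommGroup F]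
    [NormedSpace ℝ F] {μ : Measure V} [μ.IsAddHaarMeasure] {g : V → F} (hg : ContDiff ℝ 1 g)
    (hsupp : HasCompactSupport g) (v : V) : ∫ x, fderiv ℝ g x v ∂μ = 0 := by
  have hint : Integrable g μ := hg.continuous.integrable_of_hasCompactSupport hsupp
  have hint' : Integrable (fun x => fderiv ℝ g x v) μ :=
    ((hg.continuous_fderiv one_ne_zero).clm_apply
      continuous_const).integrable_of_hasCompactSupport (hsupp.fderiv_apply ℝ v)
  simpa using integral_smul_fderiv_eq_neg_fderiv_smul_of_integrable (𝕜 := ℝ) (μ := μ)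
    (f := fun _ => 1) (g := g) (v := v) (by simp) (by simpa using hint') (by simpa using hint)
    (fun _ _ => differentiableAt_const 1) (fun x _ => hg.differentiable one_ne_zero x)

lemma exists_eq_add_smul_of_hasDerivAt {F : Type*} [NormedAddCommGroup F] [NormedSpace ℝ F]
    {I : Set ℝ} (hI : IsOpen I) (hconn : IsPreconnected I) {g : ℝ → F} {v : F}
    (hg : ∀ s ∈ I, HasDerivAt g v s) : ∃ c, ∀ s ∈ I, g s = c + s • v := by
  have hderiv : ∀ s ∈ I, HasDerivAt (fun s => g s - s • v) 0 s := fun s hs => by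
    simpa using (hg s hs).fun_sub ((hasDerivAt_id' s).smul_const v)
  obtain ⟨c, hc⟩ := hI.exists_is_const_of_deriv_eq_zero hconn
    (fun s hs => (hderiv s hs).differentiableAt.differentiableWithinAt)
    (fun s hs => (hderiv s hs).deriv)
  exact ⟨c, fun s hs => sub_eq_iff_eq_add.1 (hc s hs)⟩

lemma exists_eq_add_smul_of_forall_norm_sub_le {F : Type*} [NormedAddCommGroup F]
    [NormedSpace ℝ F] {I : Set ℝ} {f : ℝ → F}
    (hf : ∀ ε > 0, ∃ m v : F, ∀ s ∈ I, ‖m + s • v - f s‖ ≤ ε) :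
    ∃ m v : F, ∀ s ∈ I, f s = m + s • v := by
  rcases I.subsingleton_or_nontrivial with hI | ⟨a, ha, b, hb, hab⟩
  · rcases hI.eq_empty_or_singleton with rfl | ⟨a, rfl⟩
    · simp
    · exact ⟨f a, 0, by simp⟩
  have hba : b - a ≠ 0 := sub_ne_zero.2 hab.symm
  have three_points : ∀ s ∈ I, (b - a) • (f s - f a) = (s - a) • (f b - f a) := by
    intro s hs
    rw [← sub_eq_zero, ← norm_le_zero_iff]
    refine le_of_forall_pos_le_add fun η hη => ?_
    set L : ℝ := |b - a| * 2 + |s - a| * 2 + 1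
    have hL : 0 < L := by positivity
    obtain ⟨m, v, hmv⟩ := hf (η / L) (by positivity)
    set r : ℝ → F := fun u => m + u • v - f u with hr
    have hdiff : ∀ u ∈ I, ‖r u - r a‖ ≤ 2 * (η / L) := fun u hu =>
      (norm_sub_le _ _).trans (by linarith [hmv u hu, hmv a ha])
    calc ‖(b - a) • (f s - f a) - (s - a) • (f b - f a)‖
        = ‖(s - a) • (r b - r a) - (b - a) • (r s - r a)‖ := by
          congr 1
          simp only [hr]
          module
      _ ≤ |s - a| * ‖r b - r a‖ + |b - a| * ‖r s - r a‖ := by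
          simpa only [norm_smul, Real.norm_eq_abs] using
            norm_sub_le ((s - a) • (r b - r a)) ((b - a) • (r s - r a))
      _ ≤ |s - a| * (2 * (η / L)) + |b - a| * (2 * (η / L)) := by
          gcongr
          exacts [hdiff b hb, hdiff s hs]
      _ = (L - 1) * (η / L) := by ring
      _ ≤ L * (η / L) := by gcongr; linarith
      _ = 0 + η := by field_simp; ring
  refine ⟨f a - a • (b - a)⁻¹ • (f b - f a), (b - a)⁻¹ • (f b - f a), fun s hs => ?_⟩
  have hfs : f s - f a = (b - a)⁻¹ • (s - a) • (f b - f a) :=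
    (eq_inv_smul_iff₀ hba).2 (three_points s hs)
  rw [← sub_add_cancel (f s) (f a), hfs]
  module

lemma abs_integral_mul_sub_le {α : Type*} [MeasurableSpace α] {μ : Measure α} {ρ y : α → ℝ}
    {z δ : ℝ} (hρ : Integrable ρ μ) (hyρ : Integrable (fun x => y x * ρ x) μ)
    (hρ0 : ∀ x, 0 ≤ ρ x) (hy : ∀ x, ρ x ≠ 0 → |y x - z| ≤ δ) :
    |(∫ x, y x * ρ x ∂μ) - z * ∫ x, ρ x ∂μ| ≤ δ * ∫ x, ρ x ∂μ := by
  rw [← integral_const_mul, ← integral_const_mul, ← integral_sub hyρ (hρ.const_mul z),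
    ← Real.norm_eq_abs]
  refine norm_integral_le_of_norm_le (hρ.const_mul δ) (ae_of_all _ fun x => ?_)
  rw [← sub_mul, norm_mul, Real.norm_of_nonneg (hρ0 x)]
  by_cases h0 : ρ x = 0
  · simp [h0]
  · exact mul_le_mul_of_nonneg_right (hy x h0) (hρ0 x)

lemma exists_deriv_deriv_eq_smul {F : Type*} [NormedAddCommGroup F] [NormedSpace ℝ F]
    {τ : ℝ → ℝ} (hτ : Differentiable ℝ τ) {t : ℝ} (hτ' : DifferentiableAt ℝ (deriv τ) t)
    (h0 : deriv τ t ≠ 0) {γ : ℝ → F} {m w : F} (hγ : ∀ t, γ t = m + τ t • w) :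
    ∃ c : ℝ, deriv (deriv γ) t = c • deriv γ t := by
  have hvel : deriv γ = fun t => deriv τ t • w := by
    funext t
    rw [funext hγ, deriv_const_add, deriv_smul_const (hτ t)]
  refine ⟨deriv (deriv τ) t / deriv τ t, ?_⟩
  rw [hvel, deriv_smul_const hτ', smul_smul, div_mul_cancel₀ _ h0]

end Calculus

section Slices

variable {n : ℕ} {F : Type*} [NormedAddCommGroup F] {I : Set ℝ}

lemma continuous_vecTail : Continuous (vecTail : Spacetime n → Fin n → ℝ) :=
  continuous_pi fun i => continuous_apply i.succ

lemma vecCons_vecTail (p : Spacetime n) : vecCons (p 0) (vecTail p) = p := cons_head_tail p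

lemma hasDerivAt_vecCons_left (s : ℝ) (x : Fin n → ℝ) :
    HasDerivAt (fun s => (vecCons s x : Spacetime n)) (Pi.single 0 1) s := by
  refine hasDerivAt_pi.2 (Fin.cases ?_ fun i => ?_)
  · simpa using hasDerivAt_id' s
  · simpa using hasDerivAt_const s (x i)

lemma hasFDerivAt_vecCons_right (s : ℝ) (x : Fin n → ℝ) :
    HasFDerivAt (fun x => (vecCons s x : Spacetime n))
      (.pi (vecCons 0 fun i => .proj i) : (Fin n → ℝ) →L[ℝ] Spacetime n) x := by
  refine hasFDerivAt_pi.2 (Fin.cases ?_ fun i => ?_)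
  · simpa using hasFDerivAt_const s x
  · simpa using hasFDerivAt_apply i x

lemma fderiv_comp_vecCons_right [NormedSpace ℝ F] {f : Spacetime n → F}
    (hf : Differentiable ℝ f) (s : ℝ) (x : Fin n → ℝ) (i : Fin n) :
    fderiv ℝ (fun x => f (vecCons s x)) x (Pi.single i 1) =
      fderiv ℝ f (vecCons s x) (Pi.single i.succ 1) := by
  have hsingle : (ContinuousLinearMap.pi (vecCons 0 fun i => .proj i) :
      (Fin n → ℝ) →L[ℝ] Spacetime n) (Pi.single i 1) = Pi.single i.succ 1 := by
    ext a
    refine Fin.cases ?_ (fun j => ?_) a <;> simp [Pi.single_apply]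
  have hcomp := (hf _).hasFDerivAt.comp x (hasFDerivAt_vecCons_right s x)
  rw [← hsingle]
  exact congrArg (· (Pi.single i 1)) hcomp.fderiv

/-- The integral of a field over the hyperplane of constant time `s`. -/
def sliceIntegral [NormedSpace ℝ F] (f : Spacetime n → F) (s : ℝ) : F :=
  ∫ x : Fin n → ℝ, f (vecCons s x)

/-- Spatially compact support over a set `I` of times: the support is compact between any two
times of `I`, although it may extend indefinitely in time. -/
def HasSpatiallyCompactSupportOn {F : Type*} [Zero F] (I : Set ℝ) (f : Spacetime n → F) : Prop :=
  ∀ K ⊆ I, IsCompact K → IsCompact (tsupport f ∩ {p | p 0 ∈ K})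

namespace HasSpatiallyCompactSupportOn

lemma mono' {F G : Type*} [Zero F] [Zero G] {f : Spacetime n → F} {g : Spacetime n → G}
    (hf : HasSpatiallyCompactSupportOn I f) (hgf : Function.support g ⊆ tsupport f) :
    HasSpatiallyCompactSupportOn I g := fun K hKI hK =>
  (hf K hKI hK).of_isClosed_subset
    ((isClosed_tsupport g).inter (hK.isClosed.preimage (continuous_apply 0)))
    (Set.inter_subset_inter_left _ (closure_minimal hgf (isClosed_tsupport f)))

variable {f : Spacetime n → F}

lemma fderiv_apply [NormedSpace ℝ F] (hf : HasSpatiallyCompactSupportOn I f) (v : Spacetime n) :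
    HasSpatiallyCompactSupportOn I fun p => fderiv ℝ f p v :=
  hf.mono' (subset_closure.trans (tsupport_fderiv_apply_subset ℝ v))

lemma exists_isCompact (hf : HasSpatiallyCompactSupportOn I f) {K : Set ℝ} (hKI : K ⊆ I)
    (hK : IsCompact K) :
    ∃ S : Set (Fin n → ℝ), IsCompact S ∧ ∀ s ∈ K, ∀ x ∉ S, f (vecCons s x) = 0 := by
  refine ⟨vecTail '' (tsupport f ∩ {p | p 0 ∈ K}),
    (hf K hKI hK).image continuous_vecTail, fun s hs x hx => ?_⟩
  by_contra h0
  exact hx ⟨vecCons s x, ⟨subset_tsupport f h0, hs⟩, tail_cons s x⟩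

lemma hasCompactSupport_slice (hf : HasSpatiallyCompactSupportOn I f) {s : ℝ} (hs : s ∈ I) :
    HasCompactSupport fun x => f (vecCons s x) :=
  have ⟨_, hS, hfS⟩ := hf.exists_isCompact (Set.singleton_subset_iff.2 hs) isCompact_singleton
  .intro hS (hfS s rfl)

lemma integrable_slice (hf : HasSpatiallyCompactSupportOn I f) (hfc : Continuous f) {s : ℝ}
    (hs : s ∈ I) : Integrable fun x => f (vecCons s x) :=
  (hfc.comp (continuous_const.matrixVecCons continuous_id)).integrable_of_hasCompactSupport
    (hf.hasCompactSupport_slice hs)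

variable [NormedSpace ℝ F]

theorem sliceIntegral_fderiv_succ (hf : HasSpatiallyCompactSupportOn I f)
    (hfc : ContDiff ℝ 1 f) {s : ℝ} (hs : s ∈ I) (i : Fin n) :
    sliceIntegral (fun p => fderiv ℝ f p (Pi.single i.succ 1)) s = 0 := by
  have hslice : ContDiff ℝ 1 fun x => f (vecCons s x) :=
    hfc.comp (contDiff_pi.2 (Fin.cases contDiff_const fun i => contDiff_apply ℝ ℝ i))
  simp only [sliceIntegral, ← fderiv_comp_vecCons_right (hfc.differentiable one_ne_zero)]
  exact integral_fderiv_apply_eq_zero hslice (hf.hasCompactSupport_slice hs) _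

theorem hasDerivAt_sliceIntegral (hf : HasSpatiallyCompactSupportOn I f)
    (hfc : ContDiff ℝ 1 f) (hI : IsOpen I) {s : ℝ} (hs : s ∈ I) :
    HasDerivAt (sliceIntegral f)
      (sliceIntegral (fun p => fderiv ℝ f p (Pi.single 0 1)) s) s := by
  have hf' := hf.fderiv_apply (Pi.single 0 1)
  have hfc' : Continuous fun p => fderiv ℝ f p (Pi.single 0 1) :=
    (hfc.continuous_fderiv one_ne_zero).clm_apply continuous_const
  obtain ⟨r, hr, hrI⟩ := Metric.nhds_basis_closedBall.mem_iff.1 (hI.mem_nhds hs)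
  obtain ⟨S, hS, hS0⟩ := hf'.exists_isCompact hrI (isCompact_closedBall s r)
  obtain ⟨B, hB⟩ := ((isCompact_closedBall s r).prod hS).exists_bound_of_continuousOn
    (f := fun q => fderiv ℝ f (vecCons q.1 q.2) (Pi.single 0 1))
    (hfc'.comp (continuous_fst.matrixVecCons continuous_snd)).continuousOn
  refine (hasDerivAt_integral_of_dominated_loc_of_deriv_le
    (F' := fun s x => fderiv ℝ f (vecCons s x) (Pi.single 0 1)) (bound := S.indicator fun _ => B)
    (Metric.closedBall_mem_nhds s hr)
    (Filter.mem_of_superset (hI.mem_nhds hs) fun u hu =>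
      (hf.integrable_slice hfc.continuous hu).aestronglyMeasurable)
    (hf.integrable_slice hfc.continuous hs)
    (hf'.integrable_slice hfc' hs).aestronglyMeasurable
    (ae_of_all _ fun x u hu => ?_) ?_ (ae_of_all _ fun x u _ => ?_)).2
  · by_cases hx : x ∈ S
    · simpa [hx] using hB (u, x) ⟨hu, hx⟩
    · simp [hx, hS0 u hu x hx]
  · exact (integrable_indicator_iff hS.measurableSet).2 (integrableOn_const hS.measure_lt_top.ne)
  · exact (hfc.differentiable one_ne_zero _).hasFDerivAt.comp_hasDerivAt u
      (hasDerivAt_vecCons_left u x)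

theorem hasDerivAt_sliceIntegral_current {J : Fin (n + 1) → Spacetime n → F}
    (hJ : ∀ a, HasSpatiallyCompactSupportOn I (J a)) (hJc : ∀ a, ContDiff ℝ 1 (J a))
    (hI : IsOpen I) {s : ℝ} (hs : s ∈ I) :
    HasDerivAt (sliceIntegral (J 0))
      (sliceIntegral (fun p => ∑ a, fderiv ℝ (J a) p (Pi.single a 1)) s) s := by
  have hsum : sliceIntegral (fun p => ∑ a, fderiv ℝ (J a) p (Pi.single a 1)) s =
      ∑ a, sliceIntegral (fun p => fderiv ℝ (J a) p (Pi.single a 1)) s :=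
    integral_finsetSum _ fun a _ => ((hJ a).fderiv_apply _).integrable_slice
      (((hJc a).continuous_fderiv one_ne_zero).clm_apply continuous_const) hs
  rw [hsum, Fin.sum_univ_succ,
    Finset.sum_eq_zero fun i _ => (hJ i.succ).sliceIntegral_fderiv_succ (hJc _) hs i, add_zero]
  exact (hJ 0).hasDerivAt_sliceIntegral (hJc 0) hI hs

end HasSpatiallyCompactSupportOn

end Slices

section EnergyMomentum

variable {n : ℕ} {T : Spacetime n → Matrix (Fin (n + 1)) (Fin (n + 1)) ℝ} {I : Set ℝ}

/-- A conserved energy–momentum field whose energy density `T 0 0` is nonnegative and does not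
vanish identically. Symmetry is encoded as the equality of energy flux and momentum density. -/
structure IsEnergyMomentumField (T : Spacetime n → Matrix (Fin (n + 1)) (Fin (n + 1)) ℝ) :
    Prop where
  contDiff : ∀ a b, ContDiff ℝ 1 fun p => T p a b
  flux_eq_momentum : ∀ p a, T p a 0 = T p 0 a
  div_eq_zero : ∀ p b, ∑ a, fderiv ℝ (fun q => T q a b) p (Pi.single a 1) = 0
  energy_nonneg : ∀ p, 0 ≤ T p 0 0
  exists_energy_ne_zero : ∃ p, T p 0 0 ≠ 0

lemma HasSpatiallyCompactSupportOn.entry (hsupp : HasSpatiallyCompactSupportOn I T)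
    (a b : Fin (n + 1)) : HasSpatiallyCompactSupportOn I fun p => T p a b :=
  hsupp.mono' fun p hp => subset_tsupport T fun h0 => hp (by simp [h0])

lemma HasSpatiallyCompactSupportOn.coord_mul {f : Spacetime n → ℝ}
    (hf : HasSpatiallyCompactSupportOn I f) (i : Fin (n + 1)) :
    HasSpatiallyCompactSupportOn I fun p => p i * f p :=
  hf.mono' fun _ hp => subset_tsupport f (right_ne_zero_of_mul hp)

lemma fderiv_coord_mul {f : Spacetime n → ℝ} {p : Spacetime n} (hf : DifferentiableAt ℝ f p)
    (i a : Fin (n + 1)) :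
    fderiv ℝ (fun q => q i * f q) p (Pi.single a 1) =
      p i * fderiv ℝ f p (Pi.single a 1) + if a = i then f p else 0 := by
  have h := (hasFDerivAt_apply (𝕜 := ℝ) i p).fun_mul hf.hasFDerivAt
  rw [h.fderiv]
  simp [Pi.single_apply, eq_comm]

namespace IsEnergyMomentumField

lemma hasDerivAt_momentum (hT : IsEnergyMomentumField T)
    (hsupp : HasSpatiallyCompactSupportOn I T) (hI : IsOpen I) (b : Fin (n + 1)) {s : ℝ}
    (hs : s ∈ I) : HasDerivAt (sliceIntegral fun p => T p 0 b) 0 s := by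
  have hbalance := HasSpatiallyCompactSupportOn.hasDerivAt_sliceIntegral_current
    (fun a => hsupp.entry a b) (fun a => hT.contDiff a b) hI hs
  simpa [hT.div_eq_zero, sliceIntegral] using hbalance

lemma hasDerivAt_dipole (hT : IsEnergyMomentumField T)
    (hsupp : HasSpatiallyCompactSupportOn I T) (hI : IsOpen I) (i : Fin (n + 1)) {s : ℝ}
    (hs : s ∈ I) :
    HasDerivAt (sliceIntegral fun p => p i * T p 0 0) (sliceIntegral (fun p => T p 0 i) s) s := by
  have hbalance := HasSpatiallyCompactSupportOn.hasDerivAt_sliceIntegral_current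
    (fun a => (hsupp.entry a 0).coord_mul i)
    (fun a => (contDiff_apply ℝ ℝ i).mul (hT.contDiff a 0)) hI hs
  have hdiv : ∀ p, ∑ a, fderiv ℝ (fun q => q i * T q a 0) p (Pi.single a 1) = T p 0 i :=
    fun p => by
      simp only [fderiv_coord_mul ((hT.contDiff _ 0).differentiable one_ne_zero p),
        Finset.sum_add_distrib, ← Finset.mul_sum, hT.div_eq_zero, mul_zero, zero_add,
        Finset.sum_ite_eq', Finset.mem_univ, if_true, hT.flux_eq_momentum p i]
  simpa only [hdiv] using hbalance

lemma exists_momentum_eq (hT : IsEnergyMomentumField T)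
    (hsupp : HasSpatiallyCompactSupportOn I T) (hI : IsOpen I) (hconn : IsPreconnected I)
    (b : Fin (n + 1)) : ∃ P, ∀ s ∈ I, sliceIntegral (fun p => T p 0 b) s = P := by
  simpa using exists_eq_add_smul_of_hasDerivAt hI hconn fun s hs =>
    hT.hasDerivAt_momentum hsupp hI b hs

lemma exists_dipole_eq (hT : IsEnergyMomentumField T)
    (hsupp : HasSpatiallyCompactSupportOn I T) (hI : IsOpen I) (hconn : IsPreconnected I)
    (i : Fin (n + 1)) :
    ∃ D P : ℝ, ∀ s ∈ I, sliceIntegral (fun p => p i * T p 0 0) s = D + s * P := by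
  obtain ⟨P, hP⟩ := hT.exists_momentum_eq hsupp hI hconn i
  obtain ⟨D, hD⟩ := exists_eq_add_smul_of_hasDerivAt hI hconn fun s hs =>
    hP s hs ▸ hT.hasDerivAt_dipole hsupp hI i hs
  exact ⟨D, P, hD⟩

lemma exists_energy_eq (hT : IsEnergyMomentumField T)
    (hsupp : HasSpatiallyCompactSupportOn I T) (hI : IsOpen I) (hconn : IsPreconnected I)
    (hTI : ∀ p ∈ tsupport T, p 0 ∈ I) :
    ∃ M > 0, ∀ s ∈ I, sliceIntegral (fun p => T p 0 0) s = M := by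
  obtain ⟨M, hM⟩ := hT.exists_momentum_eq hsupp hI hconn 0
  obtain ⟨p, hp⟩ := hT.exists_energy_ne_zero
  have hpI : p 0 ∈ I := hTI p (subset_tsupport T fun h0 => hp (by simp [h0]))
  refine ⟨M, hM (p 0) hpI ▸ ?_, hM⟩
  refine Continuous.integral_pos_of_hasCompactSupport_nonneg_nonzero (x := vecTail p)
    ((hT.contDiff 0 0).continuous.comp (continuous_const.matrixVecCons continuous_id))
    ((hsupp.entry 0 0).hasCompactSupport_slice hpI) (fun x => hT.energy_nonneg _) ?_
  rwa [vecCons_vecTail]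

/-- The affine function is the centre of mass, dipole divided by energy. -/
theorem exists_affine_abs_sub_le (hT : IsEnergyMomentumField T)
    (hsupp : HasSpatiallyCompactSupportOn I T) (hI : IsOpen I) (hconn : IsPreconnected I)
    (hTI : ∀ p ∈ tsupport T, p 0 ∈ I) (i : Fin (n + 1)) {z : ℝ → ℝ} {δ : ℝ}
    (hz : ∀ p ∈ tsupport T, |p i - z (p 0)| ≤ δ) :
    ∃ m v : ℝ, ∀ s ∈ I, |m + s * v - z s| ≤ δ := by
  obtain ⟨M, hM0, hM⟩ := hT.exists_energy_eq hsupp hI hconn hTI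
  obtain ⟨D, P, hD⟩ := hT.exists_dipole_eq hsupp hI hconn i
  refine ⟨D / M, P / M, fun s hs => ?_⟩
  have hmean := abs_integral_mul_sub_le (z := z s) (δ := δ)
    ((hsupp.entry 0 0).integrable_slice (hT.contDiff 0 0).continuous hs)
    (((hsupp.entry 0 0).coord_mul i).integrable_slice
      ((continuous_apply i).mul (hT.contDiff 0 0).continuous) hs)
    (fun x => hT.energy_nonneg _)
    (fun x hx => hz (vecCons s x) (subset_tsupport T fun h0 => hx (by simp [h0])))
  change |sliceIntegral (fun p => p i * T p 0 0) s - z s * sliceIntegral (fun p => T p 0 0) s| ≤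
    δ * sliceIntegral (fun p => T p 0 0) s at hmean
  rw [hM s hs, hD s hs] at hmean
  have hfactor : D / M + s * (P / M) - z s = (D + s * P - z s * M) / M := by field_simp
  rwa [hfactor, abs_div, abs_of_pos hM0, div_le_iff₀ hM0]

end IsEnergyMomentumField

end EnergyMomentum

section Worldline

variable {n : ℕ} {I : Set ℝ} {X : ℝ → Fin n → ℝ} {ε : ℝ}

/-- The open tube of radius `ε` (measured at constant time, in the sup norm) around the graph of
the worldline `X` over the set `I` of times. -/
def worldTube (I : Set ℝ) (X : ℝ → Fin n → ℝ) (ε : ℝ) : Set (Spacetime n) :=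
  {p | p 0 ∈ I ∧ dist (vecTail p) (X (p 0)) < ε}

lemma isOpen_worldTube (hI : IsOpen I) (hX : ContinuousOn X I) : IsOpen (worldTube I X ε) := by
  have htime : Continuous fun p : Spacetime n => p 0 := continuous_apply 0
  have hdist : ContinuousOn (fun p => dist (vecTail p) (X (p 0))) {p : Spacetime n | p 0 ∈ I} :=
    continuous_dist.comp_continuousOn
      (continuous_vecTail.continuousOn.prodMk (hX.comp htime.continuousOn fun _ hp => hp))
  exact hdist.isOpen_inter_preimage (hI.preimage htime) isOpen_Iio

lemma hasSpatiallyCompactSupportOn_of_subset_worldTube {F : Type*} [Zero F]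
    {f : Spacetime n → F} (hX : ContinuousOn X I) (hf : tsupport f ⊆ worldTube I X ε) :
    HasSpatiallyCompactSupportOn I f := by
  intro K hKI hK
  have hbox : IsCompact (K ×ˢ Metric.cthickening ε (X '' K)) :=
    hK.prod (hK.image_of_continuousOn (hX.mono hKI)).cthickening
  refine (hbox.image (continuous_fst.matrixVecCons continuous_snd)).of_isClosed_subset
    ((isClosed_tsupport f).inter (hK.isClosed.preimage (continuous_apply 0))) ?_
  rintro p ⟨hp, hpK⟩
  exact ⟨(p 0, vecTail p), ⟨hpK, Metric.mem_cthickening_of_dist_le _ _ _ _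
    (Set.mem_image_of_mem X hpK) (hf hp).2.le⟩, vecCons_vecTail p⟩

theorem IsEnergyMomentumField.exists_affine_norm_sub_le
    {T : Spacetime n → Matrix (Fin (n + 1)) (Fin (n + 1)) ℝ} (hT : IsEnergyMomentumField T)
    (hI : IsOpen I) (hconn : IsPreconnected I) (hX : ContinuousOn X I) (hε : 0 ≤ ε)
    (hTX : tsupport T ⊆ worldTube I X ε) :
    ∃ m v : Fin n → ℝ, ∀ s ∈ I, ‖m + s • v - X s‖ ≤ ε := by
  have hsupp := hasSpatiallyCompactSupportOn_of_subset_worldTube hX hTX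
  choose m v hmv using fun i : Fin n => hT.exists_affine_abs_sub_le hsupp hI hconn
    (fun p hp => (hTX hp).1) i.succ (z := fun s => X s i) (δ := ε)
    (fun p hp => (dist_le_pi_dist (vecTail p) (X (p 0)) i).trans (hTX hp).2.le)
  exact ⟨m, v, fun s hs => (pi_norm_le_iff_of_nonneg hε).2 fun i => hmv i s hs⟩

theorem exists_eq_add_smul_of_forall_isEnergyMomentumField_graph (hI : IsOpen I)
    (hconn : IsPreconnected I) (hX : ContinuousOn X I)
    (h : ∀ O : Set (Spacetime n), IsOpen O → (∀ s ∈ I, vecCons s (X s) ∈ O) →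
      ∃ T, IsEnergyMomentumField T ∧ tsupport T ⊆ O) :
    ∃ m v : Fin n → ℝ, ∀ s ∈ I, X s = m + s • v := by
  refine exists_eq_add_smul_of_forall_norm_sub_le fun ε hε => ?_
  obtain ⟨T, hT, hTX⟩ := h (worldTube I X ε) (isOpen_worldTube hI hX)
    fun s hs => ⟨hs, by simpa using hε⟩
  exact hT.exists_affine_norm_sub_le hI hconn hX hε.le hTX

lemma isOpen_range_of_strictMono {τ : ℝ → ℝ} (hτ : StrictMono τ)
    (hcont : Continuous τ) : IsOpen (Set.range τ) := by
  refine isOpen_iff_mem_nhds.2 ?_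
  rintro _ ⟨t, rfl⟩
  refine Filter.mem_of_superset (Icc_mem_nhds (hτ (sub_one_lt t)) (hτ (lt_add_one t))) ?_
  exact (isPreconnected_range hcont).ordConnected.out ⟨_, rfl⟩ ⟨_, rfl⟩

theorem exists_eq_add_smul_of_forall_isEnergyMomentumField {γ : ℝ → Spacetime n}
    (hγ : Continuous γ) (hmono : StrictMono fun t => γ t 0)
    (h : ∀ O : Set (Spacetime n), IsOpen O → Set.range γ ⊆ O →
      ∃ T, IsEnergyMomentumField T ∧ tsupport T ⊆ O) :
    ∃ m w : Spacetime n, ∀ t, γ t = m + γ t 0 • w := by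
  have htime : Continuous fun t => γ t 0 := (continuous_apply 0).comp hγ
  have hI := isOpen_range_of_strictMono hmono htime
  have hconn := isPreconnected_range htime
  have hemb : IsOpenEmbedding fun t => γ t 0 :=
    ⟨hmono.isEmbedding_of_ordConnected hconn.ordConnected, hI⟩
  set clock := hemb.toOpenPartialHomeomorph
  have hclock : ∀ t, clock.symm (γ t 0) = t := fun t => hemb.toOpenPartialHomeomorph_left_inv
  have hX : ContinuousOn (fun s => vecTail (γ (clock.symm s))) (Set.range fun t => γ t 0) :=
    continuous_vecTail.comp_continuousOn
      (hγ.comp_continuousOn (by simpa [clock] using clock.continuousOn_symm))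
  obtain ⟨m, v, hmv⟩ := exists_eq_add_smul_of_forall_isEnergyMomentumField_graph hI hconn hX
    fun O hO hgraph => h O hO <| by
      rintro _ ⟨t, rfl⟩
      simpa [hclock, vecCons_vecTail] using hgraph (γ t 0) ⟨t, rfl⟩
  refine ⟨vecCons 0 m, vecCons 1 v, fun t => ?_⟩
  have ht := hmv (γ t 0) ⟨t, rfl⟩
  rw [hclock] at ht
  ext a
  refine Fin.cases (by simp) (fun i => ?_) a
  simpa [vecTail] using congrFun ht i

end Worldline

section DominantEnergy

lemma futureCausal_single_add_smul_single (a : Fin 4) {ε : ℝ} (hε : |ε| ≤ 1) :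
    FutureCausal (Pi.single 0 1 + ε • Pi.single a 1) := by
  have hsq : ε * ε ≤ 1 := abs_le_one_iff_mul_self_le_one.1 hε
  have hpos : 0 ≤ 1 + ε := neg_le_iff_add_nonneg'.1 (neg_le_of_abs_le hε)
  constructor <;> fin_cases a <;> simp [mink, hsq, hpos, mul_self_nonneg]

lemma DEC.abs_apply_le {T : Mat4} (hT : DEC T) (a b : Fin 4) : |T a b| ≤ T 0 0 := by
  have hpair : ∀ ε δ : ℝ, |ε| ≤ 1 → |δ| ≤ 1 →
      0 ≤ T 0 0 + δ * T 0 b + ε * T a 0 + ε * δ * T a b := by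
    intro ε δ hε hδ
    have h := hT _ _ (futureCausal_single_add_smul_single a hε)
      (futureCausal_single_add_smul_single b hδ)
    simp only [Pi.add_apply, Pi.single_apply, Pi.smul_apply, smul_eq_mul, mul_ite, mul_one,
      mul_zero, add_mul, ite_mul, one_mul, zero_mul, mul_add, Finset.sum_add_distrib,
      Finset.sum_ite_eq', Finset.mem_univ, if_true] at h
    linarith
  have hpp := hpair 1 1 (by simp) (by simp)
  have hpm := hpair 1 (-1) (by simp) (by simp)
  have hmp := hpair (-1) 1 (by simp) (by simp)
  have hmm := hpair (-1) (-1) (by simp) (by simp)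
  rw [abs_le]
  constructor <;> linarith

lemma DEC.eq_zero_of_energy_eq_zero {T : Mat4} (hT : DEC T) (h0 : T 0 0 = 0) : T = 0 :=
  Matrix.ext fun a b => abs_nonpos_iff.1 ((hT.abs_apply_le a b).trans_eq h0)

lemma isEnergyMomentumField_of_dec {T : Vec4 → Mat4} (hsmooth : SmoothMatField T)
    (hsymm : SymValued T) (hdec : ∀ p, DEC (T p)) (hdiv : DivFree T) (hne : T ≠ 0) :
    IsEnergyMomentumField T where
  contDiff a b := contDiff_infty.1 (hsmooth a b) 1
  flux_eq_momentum p a := congrFun₂ (hsymm p) 0 a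
  div_eq_zero := hdiv
  energy_nonneg p := (abs_nonneg _).trans ((hdec p).abs_apply_le 0 0)
  exists_energy_ne_zero := by
    obtain ⟨p, hp⟩ := Function.ne_iff.1 hne
    exact ⟨p, mt (hdec p).eq_zero_of_energy_eq_zero hp⟩

end DominantEnergy

theorem geroch_jang_general {n : ℕ} (γ : ℝ → Spacetime n) (hγ : ContDiff ℝ 2 γ)
    (hfuture : ∀ t, 0 < deriv γ t 0)
    (h : ∀ O : Set (Spacetime n), IsOpen O → Set.range γ ⊆ O →
      ∃ T, IsEnergyMomentumField T ∧ tsupport T ⊆ O) :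
    ∀ t : ℝ, ∃ c : ℝ, deriv (deriv γ) t = c • deriv γ t := by
  have hdiff : Differentiable ℝ γ := hγ.differentiable two_ne_zero
  have htime : ContDiff ℝ 2 fun t => γ t 0 := (contDiff_apply ℝ ℝ 0).comp hγ
  have hrate : ∀ t, 0 < deriv (fun t => γ t 0) t := fun t => by
    rw [(hasDerivAt_pi.1 (hdiff t).hasDerivAt 0).deriv]
    exact hfuture t
  obtain ⟨m, w, hline⟩ := exists_eq_add_smul_of_forall_isEnergyMomentumField hγ.continuous
    (strictMono_of_deriv_pos hrate) h
  exact fun t => exists_deriv_deriv_eq_smul (htime.differentiable two_ne_zero)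
    (htime.differentiable_deriv_two t) (hrate t).ne' hline

/-- Geroch–Jang theorem in Minkowski spacetime. -/
theorem geroch_jang (γ : ℝ → Vec4) (hγ : ContDiff ℝ (⊤ : ℕ∞) γ)
    (htl : ∀ t : ℝ, FutureTimelike (deriv γ t))
    (h : ∀ O : Set Vec4, IsOpen O → Set.range γ ⊆ O →
      ∃ T : Vec4 → Mat4, SmoothMatField T ∧ SymValued T ∧ (∀ p, DEC (T p)) ∧
        DivFree T ∧ T ≠ 0 ∧ tsupport T ⊆ O) :
    ∀ t : ℝ, ∃ c : ℝ, deriv (deriv γ) t = c • deriv γ t :=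
  geroch_jang_general γ (contDiff_infty.1 hγ 2) (fun t => (htl t).2) fun O hO hγO =>
    have ⟨T, hsmooth, hsymm, hdec, hdiv, hne, hTO⟩ := h O hO hγO
    ⟨T, isEnergyMomentumField_of_dec hsmooth hsymm hdec hdiv hne, hTO⟩
end
end
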